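/- arXiv:1202.1106 — 5 statements merged into one kernel-verified Lean document; each statement's English description precedes it below -/
import Mathlib

section
/- Let T, e₁, e₂ : ℝ² → ℝ³ be smooth maps forming an orthonormal frame at each point (t,x), and let α, β, a, b, c : ℝ² → ℝ be smooth functions such that ∂_x T = α e₁ + β e₂, ∂_x e₁ = −α T, ∂_x e₂ = −β T, and ∂_t T = a e₁ + b e₂, ∂_t e₁ = −a T + c e₂, ∂_t e₂ = −b T − c e₁. Then the coefficients satisfy the compatibility system ∂_x a = −β c + ∂_t α, ∂_x b = α c + ∂_t β, and ∂_x c = β a − α b. -/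
/-!
The identities come from equality of mixed partial derivatives (`deriv_comm_of_contDiff`) applied to
`T` and to `e₁`. Differentiating the evolution equations once more by the product rule gives

* `∂_x ∂_t T - ∂_t ∂_x T = (∂_x a - ∂_t α + β c) e₁ + (∂_x b - ∂_t β - α c) e₂`,
* `∂_x ∂_t e₁ - ∂_t ∂_x e₁ = -(∂_x a - ∂_t α + β c) T + (∂_x c - β a + α b) e₂`.

Both vanish, and pairing with `e₁` and `e₂` (`coeffs_eq_zero`) isolates each coefficient.
-/

/-- The partial derivatives of a function on `ℝ × ℝ`, through its Fréchet derivative. -/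
lemma hasDerivAt_partials {E : Type*} [NormedAddCommGroup E] [NormedSpace ℝ E]
    {F : ℝ → ℝ → E} {t x : ℝ} (hF : DifferentiableAt ℝ (fun p : ℝ × ℝ => F p.1 p.2) (t, x)) :
    HasDerivAt (fun τ => F τ x) (fderiv ℝ (fun p : ℝ × ℝ => F p.1 p.2) (t, x) (1, 0)) t ∧
    HasDerivAt (fun y => F t y) (fderiv ℝ (fun p : ℝ × ℝ => F p.1 p.2) (t, x) (0, 1)) x :=
  ⟨HasFDerivAt.comp_hasDerivAt (f := fun τ => (τ, x)) t hF.hasFDerivAt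
      ((hasDerivAt_id t).prodMk (hasDerivAt_const t x)),
    HasFDerivAt.comp_hasDerivAt (f := fun y => (t, y)) x hF.hasFDerivAt
      ((hasDerivAt_const x t).prodMk (hasDerivAt_id x))⟩

lemma hasDerivAt_fst {E : Type*} [NormedAddCommGroup E] [NormedSpace ℝ E] {F : ℝ → ℝ → E}
    (hF : ContDiff ℝ (⊤ : ℕ∞) (fun p : ℝ × ℝ => F p.1 p.2)) (t x : ℝ) :
    HasDerivAt (fun τ => F τ x) (deriv (fun τ => F τ x) t) t :=
  (hasDerivAt_partials (hF.differentiable (by simp) (t, x))).1.differentiableAt.hasDerivAt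

lemma hasDerivAt_snd {E : Type*} [NormedAddCommGroup E] [NormedSpace ℝ E] {F : ℝ → ℝ → E}
    (hF : ContDiff ℝ (⊤ : ℕ∞) (fun p : ℝ × ℝ => F p.1 p.2)) (t x : ℝ) :
    HasDerivAt (fun y => F t y) (deriv (fun y => F t y) x) x :=
  (hasDerivAt_partials (hF.differentiable (by simp) (t, x))).2.differentiableAt.hasDerivAt

/-- Equality of mixed partial derivatives, in terms of one-variable derivatives. -/
lemma deriv_comm_of_contDiff {E : Type*} [NormedAddCommGroup E] [NormedSpace ℝ E] {F : ℝ → ℝ → E}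
    (hF : ContDiff ℝ (⊤ : ℕ∞) (fun p : ℝ × ℝ => F p.1 p.2)) (t x : ℝ) :
    deriv (fun y => deriv (fun τ => F τ y) t) x = deriv (fun τ => deriv (fun y => F τ y) x) t := by
  set f : ℝ × ℝ → E := fun p => F p.1 p.2 with hf
  have hd : Differentiable ℝ f := hF.differentiable (by simp)
  have h1 : ∀ s y, deriv (fun τ => F τ y) s = fderiv ℝ f (s, y) (1, 0) :=
    fun s y => (hasDerivAt_partials (hd (s, y))).1.deriv
  have h2 : ∀ s y, deriv (fun z => F s z) y = fderiv ℝ f (s, y) (0, 1) :=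
    fun s y => (hasDerivAt_partials (hd (s, y))).2.deriv
  simp only [h1, h2]
  have hF2 : ContDiff ℝ 2 f := contDiff_infty.1 hF 2
  have hd2 : Differentiable ℝ (fderiv ℝ f) :=
    (hF2.fderiv_right (m := 1) (by norm_num)).differentiable (by simp)
  have k := hasDerivAt_partials (F := fun s y => fderiv ℝ f (s, y)) (hd2 (t, x))
  have kx := (k.2.clm_apply (hasDerivAt_const x ((1, 0) : ℝ × ℝ))).deriv
  have kt := (k.1.clm_apply (hasDerivAt_const t ((0, 1) : ℝ × ℝ))).deriv
  simp only [map_zero, add_zero] at kx kt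
  rw [kx, kt]
  have hs : IsSymmSndFDerivAt ℝ f (t, x) :=
    hF2.contDiffAt.isSymmSndFDerivAt (by simp)
  exact hs (0, 1) (1, 0)

/-- A relation `p u + q v + r w = 0`, read off against an orthonormal pair `v`, `w`, both
orthogonal to `u`. -/
lemma coeffs_eq_zero {u v w : Fin 3 → ℝ} {p q r : ℝ}
    (hvv : ∑ i, v i * v i = 1) (hww : ∑ i, w i * w i = 1)
    (huv : ∑ i, u i * v i = 0) (huw : ∑ i, u i * w i = 0) (hvw : ∑ i, v i * w i = 0)
    (h : p • u + q • v + r • w = 0) : q = 0 ∧ r = 0 := by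
  have h0 := congrFun h 0
  have h1 := congrFun h 1
  have h2 := congrFun h 2
  simp only [Fin.sum_univ_three] at hvv hww huv huw hvw
  simp only [Pi.add_apply, Pi.smul_apply, smul_eq_mul, Pi.zero_apply] at h0 h1 h2
  constructor
  · linear_combination v 0 * h0 + v 1 * h1 + v 2 * h2 - p * huv - q * hvv - r * hvw
  · linear_combination w 0 * h0 + w 1 * h1 + w 2 * h2 - p * huw - q * hvw - r * hww


/-- Zero-curvature compatibility conditions for a moving parallel
orthonormal frame `(T, e₁, e₂)` in `ℝ³` whose `x`-evolution has coefficients `α, β`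
(with `0` in the `(e₁,e₂)` slot) and whose `t`-evolution has coefficients `a, b, c`:
`∂_x a = −β c + ∂_t α`, `∂_x b = α c + ∂_t β`, `∂_x c = β a − α b`. -/
theorem frame_compatibility
    (T e₁ e₂ : ℝ → ℝ → (Fin 3 → ℝ)) (α β a b c : ℝ → ℝ → ℝ)
    (hT : ContDiff ℝ (⊤ : ℕ∞) (fun p : ℝ × ℝ => T p.1 p.2))
    (he₁ : ContDiff ℝ (⊤ : ℕ∞) (fun p : ℝ × ℝ => e₁ p.1 p.2))
    (he₂ : ContDiff ℝ (⊤ : ℕ∞) (fun p : ℝ × ℝ => e₂ p.1 p.2))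
    (hα : ContDiff ℝ (⊤ : ℕ∞) (fun p : ℝ × ℝ => α p.1 p.2))
    (hβ : ContDiff ℝ (⊤ : ℕ∞) (fun p : ℝ × ℝ => β p.1 p.2))
    (ha : ContDiff ℝ (⊤ : ℕ∞) (fun p : ℝ × ℝ => a p.1 p.2))
    (hb : ContDiff ℝ (⊤ : ℕ∞) (fun p : ℝ × ℝ => b p.1 p.2))
    (hc : ContDiff ℝ (⊤ : ℕ∞) (fun p : ℝ × ℝ => c p.1 p.2))
    -- orthonormality of the frame at each point
    (hTT : ∀ t x, ∑ i, T t x i * T t x i = 1)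
    (h11 : ∀ t x, ∑ i, e₁ t x i * e₁ t x i = 1)
    (h22 : ∀ t x, ∑ i, e₂ t x i * e₂ t x i = 1)
    (hT1 : ∀ t x, ∑ i, T t x i * e₁ t x i = 0)
    (hT2 : ∀ t x, ∑ i, T t x i * e₂ t x i = 0)
    (h12 : ∀ t x, ∑ i, e₁ t x i * e₂ t x i = 0)
    -- `x`-evolution of the frame
    (hTx : ∀ t x, deriv (fun y => T t y) x = α t x • e₁ t x + β t x • e₂ t x)
    (h1x : ∀ t x, deriv (fun y => e₁ t y) x = -(α t x) • T t x)
    (h2x : ∀ t x, deriv (fun y => e₂ t y) x = -(β t x) • T t x)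
    -- `t`-evolution of the frame
    (hTt : ∀ t x, deriv (fun τ => T τ x) t = a t x • e₁ t x + b t x • e₂ t x)
    (h1t : ∀ t x, deriv (fun τ => e₁ τ x) t = -(a t x) • T t x + c t x • e₂ t x)
    (h2t : ∀ t x, deriv (fun τ => e₂ τ x) t = -(b t x) • T t x - c t x • e₁ t x) :
    ∀ t x : ℝ,
      deriv (fun y => a t y) x = -(β t x) * c t x + deriv (fun τ => α τ x) t ∧
      deriv (fun y => b t y) x = α t x * c t x + deriv (fun τ => β τ x) t ∧
      deriv (fun y => c t y) x = β t x * a t x - α t x * b t x := by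
  intro t x
  have mT := deriv_comm_of_contDiff hT t x
  have m1 := deriv_comm_of_contDiff he₁ t x
  simp only [hTx, hTt] at mT
  simp only [h1x, h1t] at m1
  have dTx := hasDerivAt_snd hT t x
  have d1x := hasDerivAt_snd he₁ t x
  have d2x := hasDerivAt_snd he₂ t x
  have dTt := hasDerivAt_fst hT t x
  have d1t := hasDerivAt_fst he₁ t x
  have d2t := hasDerivAt_fst he₂ t x
  rw [hTx] at dTx
  rw [h1x] at d1x
  rw [h2x] at d2x
  rw [hTt] at dTt
  rw [h1t] at d1t
  rw [h2t] at d2t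
  have dax := hasDerivAt_snd ha t x
  have dbx := hasDerivAt_snd hb t x
  have dcx := hasDerivAt_snd hc t x
  have dαt := hasDerivAt_fst hα t x
  have dβt := hasDerivAt_fst hβ t x
  rw [((dax.fun_smul d1x).fun_add (dbx.fun_smul d2x)).deriv,
    ((dαt.fun_smul d1t).fun_add (dβt.fun_smul d2t)).deriv] at mT
  rw [((dax.fun_neg.fun_smul dTx).fun_add (dcx.fun_smul d2x)).deriv,
    (dαt.fun_neg.fun_smul dTt).deriv] at m1
  generalize deriv (fun y => a t y) x = ax at *
  generalize deriv (fun y => b t y) x = bx at *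
  generalize deriv (fun y => c t y) x = cx at *
  generalize deriv (fun τ => α τ x) t = αt at *
  generalize deriv (fun τ => β τ x) t = βt at *
  have kT : (0 : ℝ) • T t x + (ax - αt + β t x * c t x) • e₁ t x
      + (bx - βt - α t x * c t x) • e₂ t x = 0 := by
    rw [← sub_eq_zero] at mT
    rw [← mT]
    module
  have k1 : (-(ax - αt + β t x * c t x)) • T t x + (0 : ℝ) • e₁ t x
      + (cx - β t x * a t x + α t x * b t x) • e₂ t x = 0 := by
    rw [← sub_eq_zero] at m1
    rw [← m1]
    module
  obtain ⟨hA, hB⟩ := coeffs_eq_zero (h11 t x) (h22 t x) (hT1 t x) (hT2 t x) (h12 t x) kT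
  obtain ⟨-, hC⟩ := coeffs_eq_zero (h11 t x) (h22 t x) (hT1 t x) (hT2 t x) (h12 t x) k1
  exact ⟨by linear_combination hA, by linear_combination hB, by linear_combination hC⟩
end

section
/- Let a ∈ ℝ and let w : (0,∞) × ℝ → ℂ be a smooth solution of the linear equation i ∂_t w + ∂_x² w + (a²/(2t))(w + conj(w)) = 0. Define v(t,x) = x·w(t,x) + 2 i t·∂_x w(t,x). Then v satisfies the forced equation i ∂_t v + ∂_x² v + (a²/(2t))(v + conj(v)) = −2 i a² · conj(∂_x w) at every point (t,x). -/
open Complex Set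

/-!
Write `L w = i w_t + w_xx + c (w + conj w)` with `c = a² / (2t)`, and `v = x w + 2 i t w_x`.
The equation `L w = 0` is differentiated in `x`; since the mixed partials of the smooth function
`w` agree (`pd_comm`), this gives `i (w_x)_t + (w_x)_xx + c (w_x + conj w_x) = 0`.
By the Leibniz rule
`i v_t + v_xx = x (i w_t + w_xx) + 2 i t (i (w_x)_t + (w_x)_xx)`,
where the commutator terms `i · 2 i w_x` and `2 w_x` cancel. The multiplication by `2 i t`
does not commute with conjugation, so the potential leaves
`2 i t c (w_x - conj w_x) - 2 i t c (w_x + conj w_x) = -4 i t c conj w_x = -2 i a² conj w_x`.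
-/

/-- The open half-plane `t > 0`, as a set of points `(t, x)`. -/
def halfPlane : Set (ℝ × ℝ) := Ioi (0 : ℝ) ×ˢ univ

/-- The directional derivative of `F` along the constant vector `e`; `e = (1, 0)` gives `∂_t` and
`e = (0, 1)` gives `∂_x`. -/
noncomputable def pd (e : ℝ × ℝ) (F : ℝ × ℝ → ℂ) (p : ℝ × ℝ) : ℂ := fderiv ℝ F p e

lemma halfPlane_mem_nhds {p : ℝ × ℝ} (hp : 0 < p.1) : halfPlane ∈ nhds p :=
  (isOpen_Ioi.prod isOpen_univ).mem_nhds ⟨hp, mem_univ _⟩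

lemma pd_contDiffOn (e : ℝ × ℝ) {F : ℝ × ℝ → ℂ}
    (hF : ContDiffOn ℝ (⊤ : ℕ∞) F halfPlane) : ContDiffOn ℝ (⊤ : ℕ∞) (pd e F) halfPlane :=
  (hF.fderiv_of_isOpen (isOpen_Ioi.prod isOpen_univ) (m := (⊤ : ℕ∞)) (by simp)).clm_apply
    contDiffOn_const

lemma hasFDerivAt_of_contDiffOn {F : ℝ × ℝ → ℂ} (hF : ContDiffOn ℝ (⊤ : ℕ∞) F halfPlane)
    {p : ℝ × ℝ} (hp : 0 < p.1) : HasFDerivAt F (fderiv ℝ F p) p :=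
  ((hF.contDiffAt (halfPlane_mem_nhds hp)).differentiableAt (by simp)).hasFDerivAt

lemma hasDerivAt_pd_x {F : ℝ × ℝ → ℂ} (hF : ContDiffOn ℝ (⊤ : ℕ∞) F halfPlane)
    {t : ℝ} (ht : 0 < t) (x : ℝ) :
    HasDerivAt (fun y => F (t, y)) (pd (0, 1) F (t, x)) x :=
  (hasFDerivAt_of_contDiffOn hF (p := (t, x)) ht).comp_hasDerivAt x
    ((hasDerivAt_const x t).prodMk (hasDerivAt_id x))

lemma hasDerivAt_pd_t {F : ℝ × ℝ → ℂ} (hF : ContDiffOn ℝ (⊤ : ℕ∞) F halfPlane)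
    {t : ℝ} (ht : 0 < t) (x : ℝ) :
    HasDerivAt (fun τ => F (τ, x)) (pd (1, 0) F (t, x)) t :=
  (hasFDerivAt_of_contDiffOn hF (p := (t, x)) ht).comp_hasDerivAt t
    ((hasDerivAt_id t).prodMk (hasDerivAt_const t x))

/-- Equality of mixed partial derivatives. -/
lemma pd_comm {F : ℝ × ℝ → ℂ} (hF : ContDiffOn ℝ (⊤ : ℕ∞) F halfPlane)
    {p : ℝ × ℝ} (hp : 0 < p.1) (d e : ℝ × ℝ) : pd d (pd e F) p = pd e (pd d F) p := by
  have hc := hF.contDiffAt (halfPlane_mem_nhds hp)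
  have hd : DifferentiableAt ℝ (fderiv ℝ F) p :=
    (hc.fderiv_right (m := 1) (by norm_cast)).differentiableAt (by simp)
  have key : ∀ d e : ℝ × ℝ, pd d (pd e F) p = fderiv ℝ (fderiv ℝ F) p d e := by
    intro d e
    have := (hd.hasFDerivAt.clm_apply (hasFDerivAt_const e p)).fderiv
    change fderiv ℝ (fun q => fderiv ℝ F q e) p d = _
    rw [this]
    simp
  rw [key, key]
  have hs : IsSymmSndFDerivAt ℝ F p := hc.isSymmSndFDerivAt (by
    simpa using (WithTop.coe_le_coe.2 le_top : ((2 : ℕ∞) : WithTop ℕ∞) ≤ ((⊤ : ℕ∞) : WithTop ℕ∞)))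
  exact hs.eq d e

/-- If `w` solves the linear equation
`i w_t + w_xx + (a²/(2t))(w + conj w) = 0` on `(0,∞) × ℝ`, then
`v = J(t)w = x w + 2 i t w_x` solves the forced equation
`i v_t + v_xx + (a²/(2t))(v + conj v) = −2 i a² conj(w_x)`. -/
theorem J_evolution_linear_equation (a : ℝ) (w : ℝ → ℝ → ℂ)
    (hw : ContDiffOn ℝ (⊤ : ℕ∞) (fun p : ℝ × ℝ => w p.1 p.2) (Ioi (0 : ℝ) ×ˢ univ))
    (heq : ∀ t : ℝ, 0 < t → ∀ x : ℝ,
      I * deriv (fun τ => w τ x) t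
        + deriv (fun y => deriv (fun z => w t z) y) x
        + ((a : ℂ) ^ 2 / (2 * (t : ℂ))) * (w t x + (starRingEnd ℂ) (w t x)) = 0)
    (v : ℝ → ℝ → ℂ)
    (hv : ∀ t x : ℝ, v t x = (x : ℂ) * w t x + 2 * I * (t : ℂ) * deriv (fun z => w t z) x) :
    ∀ t : ℝ, 0 < t → ∀ x : ℝ,
      I * deriv (fun τ => v τ x) t
        + deriv (fun y => deriv (fun z => v t z) y) x
        + ((a : ℂ) ^ 2 / (2 * (t : ℂ))) * (v t x + (starRingEnd ℂ) (v t x))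
      = -2 * I * (a : ℂ) ^ 2 * (starRingEnd ℂ) (deriv (fun z => w t z) x) := by
  intro t ht x
  set W : ℝ × ℝ → ℂ := fun p => w p.1 p.2 with hW
  have h0 : ContDiffOn ℝ (⊤ : ℕ∞) W halfPlane := hw
  have hX := pd_contDiffOn (0, 1) h0
  have hT := pd_contDiffOn (1, 0) h0
  have hXX := pd_contDiffOn (0, 1) hX
  have dx : ∀ s : ℝ, 0 < s → ∀ y, deriv (fun z => w s z) y = pd (0, 1) W (s, y) :=
    fun s hs y => (hasDerivAt_pd_x h0 hs y).deriv
  have dt : ∀ y, deriv (fun τ => w τ y) t = pd (1, 0) W (t, y) :=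
    fun y => (hasDerivAt_pd_t h0 ht y).deriv
  have dxx : ∀ y, deriv (fun y => deriv (fun z => w t z) y) y
      = pd (0, 1) (pd (0, 1) W) (t, y) := by
    intro y
    simp only [dx t ht]
    exact (hasDerivAt_pd_x hX ht y).deriv
  have eq0 : ∀ y, I * pd (1, 0) W (t, y) + pd (0, 1) (pd (0, 1) W) (t, y)
      + ((a : ℂ) ^ 2 / (2 * (t : ℂ))) * (W (t, y) + (starRingEnd ℂ) (W (t, y))) = 0 := by
    intro y
    have := heq t ht y
    rwa [dt, dxx] at this
  -- The equation for `w_x`, by uniqueness of the derivative of the zero function.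
  have eq1 : I * pd (1, 0) (pd (0, 1) W) (t, x) + pd (0, 1) (pd (0, 1) (pd (0, 1) W)) (t, x)
      + ((a : ℂ) ^ 2 / (2 * (t : ℂ))) *
        (pd (0, 1) W (t, x) + (starRingEnd ℂ) (pd (0, 1) W (t, x))) = 0 := by
    have hd := (((hasDerivAt_pd_x hT ht x).const_mul I).add (hasDerivAt_pd_x hXX ht x)).add
      (((hasDerivAt_pd_x h0 ht x).add (hasDerivAt_pd_x h0 ht x).star).const_mul
        ((a : ℂ) ^ 2 / (2 * (t : ℂ))))
    rw [pd_comm h0 (p := (t, x)) ht (1, 0) (0, 1)]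
    refine hd.unique ((hasDerivAt_const x (0 : ℂ)).congr_of_eventuallyEq ?_)
    exact Filter.Eventually.of_forall eq0
  have hvt : deriv (fun τ => v τ x) t = (x : ℂ) * pd (1, 0) W (t, x)
      + (2 * I * pd (0, 1) W (t, x) + 2 * I * (t : ℂ) * pd (1, 0) (pd (0, 1) W) (t, x)) := by
    have h1 : HasDerivAt (fun τ : ℝ => 2 * I * (τ : ℂ)) (2 * I) t := by
      simpa using (hasDerivAt_id t).ofReal_comp.const_mul (2 * I)
    refine HasDerivAt.deriv (HasDerivAt.congr_of_eventuallyEq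
      (((hasDerivAt_pd_t h0 ht x).const_mul (x : ℂ)).add (h1.mul (hasDerivAt_pd_t hX ht x))) ?_)
    filter_upwards [Ioi_mem_nhds ht] with s hs
    rw [hv, dx s hs]
    rfl
  have hvx : ∀ y, deriv (fun z => v t z) y = W (t, y) + (y : ℂ) * pd (0, 1) W (t, y)
      + 2 * I * (t : ℂ) * pd (0, 1) (pd (0, 1) W) (t, y) := by
    intro y
    have h1 : HasDerivAt (fun z : ℝ => (z : ℂ)) 1 y := by
      simpa using (hasDerivAt_id y).ofReal_comp
    have h2 := (h1.mul (hasDerivAt_pd_x h0 ht y)).add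
      ((hasDerivAt_pd_x hX ht y).const_mul (2 * I * (t : ℂ)))
    rw [one_mul] at h2
    refine HasDerivAt.deriv (h2.congr_of_eventuallyEq (Filter.Eventually.of_forall fun z => ?_))
    change v t z = _
    rw [hv, dx t ht]
    rfl
  have hvxx : deriv (fun y => deriv (fun z => v t z) y) x
      = 2 * pd (0, 1) W (t, x) + (x : ℂ) * pd (0, 1) (pd (0, 1) W) (t, x)
        + 2 * I * (t : ℂ) * pd (0, 1) (pd (0, 1) (pd (0, 1) W)) (t, x) := by
    simp only [hvx]
    have h1 : HasDerivAt (fun z : ℝ => (z : ℂ)) 1 x := by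
      simpa using (hasDerivAt_id x).ofReal_comp
    have h2 := ((hasDerivAt_pd_x h0 ht x).add (h1.mul (hasDerivAt_pd_x hX ht x))).add
      ((hasDerivAt_pd_x hXX ht x).const_mul (2 * I * (t : ℂ)))
    refine Eq.trans h2.deriv ?_
    ring
  have e0 := eq0 x
  have hWx : W (t, x) = w t x := rfl
  rw [hvt, hvxx, hv, dx t ht]
  rw [hWx] at e0
  simp only [map_add, map_mul, conj_I, conj_ofReal, map_ofNat]
  have htc : (t : ℂ) ≠ 0 := by exact_mod_cast ht.ne'
  have hc : (a : ℂ) ^ 2 = 2 * (t : ℂ) * ((a : ℂ) ^ 2 / (2 * (t : ℂ))) := by field_simp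
  -- Naming `c` lets the final identity be checked as a polynomial one.
  generalize (a : ℂ) ^ 2 / (2 * (t : ℂ)) = c at *
  rw [hc]
  linear_combination (x : ℂ) * e0 + 2 * I * (t : ℂ) * eq1 + 2 * pd (0, 1) W (t, x) * I_sq
end

section
/- For every a ∈ ℝ and every δ > 0 there exists a constant C = C(a, δ) > 0 with the following property: for every ξ ∈ ℝ, every 1 ≤ t₀ ≤ t, and every pair of differentiable functions X, Y : [t₀, t] → ℝ satisfying X′(τ) = ξ² Y(τ) and Y′(τ) = (−ξ² + a²/τ) X(τ) for all τ ∈ [t₀, t], one has |X(t)| + |Y(t)| ≤ C · (t/t₀)^δ · (|X(t₀)| + |Y(t₀)|). -/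
open Set

/-!
Put `N = X² + Y²` and measure time by `s = log τ`. With `u = ξ² τ` the system reads
`dX/ds = u Y`, `dY/ds = (a² - u) X`, and a growth rate `r` in `s` is a factor `(t / t₀) ^ r`.
It suffices to bound `N` with rate `r = 2 δ`, uniformly in `ξ`. There are three regimes.

* `u ≤ η` small: the energy `κ² X² + Y²` with `κ` large has logarithmic derivative at most
  `((κ² - 1) u + a²) / κ`, which is at most `r` for `κ` large and `η = κ⁻²`.
* `u ≥ M` large: for the energy `(1 - a² / u) X² + Y²` the cross terms cancel, and the
  derivative is only `(a² / u) X²`.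
* `η ≤ u ≤ M`: this lasts for a time `log (M / η)` in `s`, independent of `ξ`, so the naive
  rate `a²` of the energy `X² + Y²` costs a constant factor only.

Both energies and `N` itself have the form `(A - B / τ) X² + Y²` with constants `A`, `B`, which is
the form treated by `FourierMode.energy_bound`; the regimes are concatenated by `FourierMode.glue`.
-/

namespace FourierMode

/-- Grönwall estimate for the energy `E = (A - B / τ) X² + Y²`. The hypothesis `hE` is the pointwise
form of `τ E' ≤ r E`, and `hl`, `hU` compare `E` with `X² + Y²`. -/
lemma energy_bound {a ξ s t r A B l U : ℝ} {X Y : ℝ → ℝ} (hs : 0 < s) (hst : s ≤ t)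
    (hX : ∀ τ ∈ Icc s t, HasDerivAt X (ξ ^ 2 * Y τ) τ)
    (hY : ∀ τ ∈ Icc s t, HasDerivAt Y ((-ξ ^ 2 + a ^ 2 / τ) * X τ) τ)
    (hl0 : 0 < l) (hl1 : l ≤ 1) (hU1 : 1 ≤ U)
    (hl : ∀ τ ∈ Icc s t, l ≤ A - B / τ) (hU : ∀ τ ∈ Icc s t, A - B / τ ≤ U)
    (hE : ∀ τ ∈ Icc s t, ∀ x y : ℝ,
      B / τ * x ^ 2 + 2 * x * y * ((A - 1) * (ξ ^ 2 * τ) - B * ξ ^ 2 + a ^ 2)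
        ≤ r * ((A - B / τ) * x ^ 2 + y ^ 2)) :
    X t ^ 2 + Y t ^ 2 ≤ U / l * (t / s) ^ r * (X s ^ 2 + Y s ^ 2) := by
  have ht : 0 < t := hs.trans_le hst
  set E : ℝ → ℝ := fun τ => (A - B / τ) * X τ ^ 2 + Y τ ^ 2 with hEdef
  have hder : ∀ τ ∈ Icc s t, HasDerivAt (fun τ => E τ * τ ^ (-r))
      (τ ^ (-r) / τ * ((B / τ * X τ ^ 2
        + 2 * X τ * Y τ * ((A - 1) * (ξ ^ 2 * τ) - B * ξ ^ 2 + a ^ 2)) - r * E τ)) τ := by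
    intro τ hτ
    have hτ0 : 0 < τ := hs.trans_le hτ.1
    have h1 : HasDerivAt (fun τ : ℝ => A - B / τ) (B / τ ^ 2) τ := by
      refine (((hasDerivAt_inv hτ0.ne').const_mul B).const_sub A).congr_deriv ?_
      field_simp
    have h2 := ((h1.mul ((hX τ hτ).pow 2)).add ((hY τ hτ).pow 2)).mul
      (Real.hasDerivAt_rpow_const (p := -r) (Or.inl hτ0.ne'))
    refine h2.congr_deriv ?_
    rw [Real.rpow_sub_one hτ0.ne']
    simp only [hEdef, Pi.add_apply, Pi.mul_apply, Pi.pow_apply]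
    field_simp
    ring
  have hanti : AntitoneOn (fun τ => E τ * τ ^ (-r)) (Icc s t) := by
    apply antitoneOn_of_hasDerivWithinAt_nonpos (convex_Icc s t)
      (fun τ hτ => (hder τ hτ).continuousAt.continuousWithinAt)
      (fun τ hτ => (hder τ (interior_subset hτ)).hasDerivWithinAt)
    intro τ hτ
    have hτ' := interior_subset hτ
    have hτ0 : 0 < τ := hs.trans_le hτ'.1
    exact mul_nonpos_of_nonneg_of_nonpos (by positivity)
      (sub_nonpos.2 (hE τ hτ' (X τ) (Y τ)))
  have hEE : E t ≤ (t / s) ^ r * E s := by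
    have h := hanti (left_mem_Icc.2 hst) (right_mem_Icc.2 hst) hst
    simp only [Real.rpow_neg ht.le, Real.rpow_neg hs.le, ← div_eq_mul_inv] at h
    rw [Real.div_rpow ht.le hs.le]
    have := Real.rpow_pos_of_pos ht r
    rw [div_le_iff₀ this] at h
    calc E t ≤ _ := h
      _ = _ := by ring
  have hlow : l * (X t ^ 2 + Y t ^ 2) ≤ E t := by
    have := hl t (right_mem_Icc.2 hst)
    simp only [hEdef]
    nlinarith [mul_nonneg (sub_nonneg.2 this) (sq_nonneg (X t)),
      mul_nonneg (sub_nonneg.2 hl1) (sq_nonneg (Y t))]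
  have hup : E s ≤ U * (X s ^ 2 + Y s ^ 2) := by
    have := hU s (left_mem_Icc.2 hst)
    simp only [hEdef]
    nlinarith [mul_nonneg (sub_nonneg.2 this) (sq_nonneg (X s)),
      mul_nonneg (sub_nonneg.2 hU1) (sq_nonneg (Y s))]
  have hp : 0 ≤ (t / s) ^ r := by positivity
  rw [show U / l * (t / s) ^ r * (X s ^ 2 + Y s ^ 2)
    = ((t / s) ^ r * (U * (X s ^ 2 + Y s ^ 2))) / l by ring, le_div_iff₀ hl0]
  linarith [mul_le_mul_of_nonneg_left hup hp]

/-- Growth bounds with the same rate `r`, below and above a time `T`, combine. -/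
lemma glue {N : ℝ → ℝ} {r T K₁ K₂ t₀ t : ℝ} (hN : ∀ τ, 0 ≤ N τ) (ht₀ : 0 < t₀)
    (hK₁ : 1 ≤ K₁) (hK₂ : 1 ≤ K₂)
    (h₁ : ∀ s u, t₀ ≤ s → s ≤ u → u ≤ t → u ≤ T → N u ≤ K₁ * (u / s) ^ r * N s)
    (h₂ : ∀ s u, t₀ ≤ s → s ≤ u → u ≤ t → T ≤ s → N u ≤ K₂ * (u / s) ^ r * N s)
    (s u : ℝ) (hs : t₀ ≤ s) (hsu : s ≤ u) (hu : u ≤ t) :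
    N u ≤ K₁ * K₂ * (u / s) ^ r * N s := by
  have hs0 : 0 < s := ht₀.trans_le hs
  have hu0 : 0 < u := hs0.trans_le hsu
  have hD : 0 ≤ (u / s) ^ r * N s := mul_nonneg (by positivity) (hN s)
  rcases le_total u T with huT | huT
  · have := h₁ s u hs hsu hu huT
    nlinarith [mul_nonneg (mul_nonneg (by linarith : 0 ≤ K₁) (sub_nonneg.2 hK₂)) hD]
  rcases le_total T s with hTs | hTs
  · have := h₂ s u hs hsu hu hTs
    nlinarith [mul_nonneg (mul_nonneg (by linarith : 0 ≤ K₂) (sub_nonneg.2 hK₁)) hD]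
  have hT0 : 0 < T := hs0.trans_le hTs
  calc N u ≤ K₂ * (u / T) ^ r * N T := h₂ T u (hs.trans hTs) huT hu le_rfl
    _ ≤ K₂ * (u / T) ^ r * (K₁ * (T / s) ^ r * N s) := by
        gcongr
        exact h₁ s T hs hTs (huT.trans hu) le_rfl
    _ = K₁ * K₂ * ((u / T) ^ r * (T / s) ^ r) * N s := by ring
    _ = K₁ * K₂ * (u / s) ^ r * N s := by
        rw [← Real.mul_rpow (by positivity) (by positivity), div_mul_div_cancel₀ hT0.ne']

/-- Low frequencies, `ξ² τ ≤ κ⁻²`, through the energy `κ² X² + Y²`. -/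
lemma low_bound {a ξ s t r κ : ℝ} {X Y : ℝ → ℝ} (hs : 0 < s) (hst : s ≤ t)
    (hX : ∀ τ ∈ Icc s t, HasDerivAt X (ξ ^ 2 * Y τ) τ)
    (hY : ∀ τ ∈ Icc s t, HasDerivAt Y ((-ξ ^ 2 + a ^ 2 / τ) * X τ) τ)
    (hκ : 1 ≤ κ) (hrκ : a ^ 2 + 1 ≤ r * κ) (hlow : ξ ^ 2 * t ≤ 1 / κ ^ 2) :
    X t ^ 2 + Y t ^ 2 ≤ κ ^ 2 * (t / s) ^ r * (X s ^ 2 + Y s ^ 2) := by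
  have hκ2 : 1 ≤ κ ^ 2 := one_le_pow₀ hκ
  have := energy_bound (r := r) (A := κ ^ 2) (B := 0) (l := 1) (U := κ ^ 2) hs hst hX hY
    one_pos le_rfl hκ2 (by simpa using fun _ _ _ => hκ2) (by simp) ?_
  · simpa using this
  intro τ hτ x y
  have hτ0 : 0 < τ := hs.trans_le hτ.1
  have hu0 : 0 ≤ ξ ^ 2 * τ := by positivity
  have hu : κ ^ 2 * (ξ ^ 2 * τ) ≤ 1 := by
    have h1 : ξ ^ 2 * τ ≤ 1 / κ ^ 2 :=
      (mul_le_mul_of_nonneg_left hτ.2 (sq_nonneg ξ)).trans hlow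
    rw [le_div_iff₀ (by positivity)] at h1
    linarith
  set c := (κ ^ 2 - 1) * (ξ ^ 2 * τ) + a ^ 2 with hc
  have hc0 : 0 ≤ c := by
    have := mul_nonneg (sub_nonneg.2 hκ2) hu0
    positivity
  have hcr : c ≤ r * κ := by nlinarith
  have hr : 0 ≤ r := by
    by_contra! h
    nlinarith [sq_nonneg a]
  have h1 : 2 * x * y * c ≤ 2 * |x| * |y| * (r * κ) := by
    have h2 : x * y ≤ |x| * |y| := by rw [← abs_mul]; exact le_abs_self _
    have h3 : 0 ≤ |x| * |y| := by positivity
    nlinarith [mul_le_mul_of_nonneg_right h2 hc0, mul_le_mul_of_nonneg_left hcr h3]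
  have h4 : 0 ≤ r * (κ * |x| - |y|) ^ 2 := by positivity
  simp only [zero_div, zero_mul, sub_zero, zero_add]
  rw [← hc, ← sq_abs x, ← sq_abs y]
  linarith

/-- High frequencies, through the energy `(1 - a² / (ξ² τ)) X² + Y²`. -/
lemma high_bound {a ξ s t r : ℝ} {X Y : ℝ → ℝ} (hs : 0 < s) (hst : s ≤ t)
    (hX : ∀ τ ∈ Icc s t, HasDerivAt X (ξ ^ 2 * Y τ) τ)
    (hY : ∀ τ ∈ Icc s t, HasDerivAt Y ((-ξ ^ 2 + a ^ 2 / τ) * X τ) τ)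
    (hξ : ξ ≠ 0) (hr : 0 < r) (hhigh : a ^ 2 * (1 + r) / r ≤ ξ ^ 2 * s) :
    X t ^ 2 + Y t ^ 2 ≤ (1 + r) * (t / s) ^ r * (X s ^ 2 + Y s ^ 2) := by
  have hξ2 : 0 < ξ ^ 2 := by positivity
  have hq : ∀ τ ∈ Icc s t, a ^ 2 / ξ ^ 2 / τ * (1 + r) ≤ r := by
    intro τ hτ
    have hτ0 : 0 < τ := hs.trans_le hτ.1
    rw [div_le_iff₀ hr] at hhigh
    rw [div_div, div_mul_eq_mul_div, div_le_iff₀ (by positivity)]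
    have := mul_le_mul_of_nonneg_left hτ.1 (mul_pos hr hξ2).le
    linarith
  have hq0 : ∀ τ ∈ Icc s t, 0 ≤ a ^ 2 / ξ ^ 2 / τ := fun τ hτ => by
    have hτ0 : 0 < τ := hs.trans_le hτ.1
    positivity
  have := energy_bound (r := r) (A := 1) (B := a ^ 2 / ξ ^ 2) (l := 1 / (1 + r)) (U := 1)
    hs hst hX hY (by positivity) ?_ le_rfl ?_ ?_ ?_
  · simpa using this
  · rw [div_le_one (by positivity)]; linarith
  · intro τ hτ
    rw [div_le_iff₀ (by positivity)]
    linarith [hq τ hτ]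
  · intro τ hτ
    linarith [hq0 τ hτ]
  · intro τ hτ x y
    have h1 : a ^ 2 / ξ ^ 2 * ξ ^ 2 = a ^ 2 := by field_simp
    rw [h1]
    nlinarith [mul_le_mul_of_nonneg_right (hq τ hτ) (sq_nonneg x),
      mul_nonneg hr.le (sq_nonneg y)]

/-- The naive Grönwall bound. -/
lemma naive_bound {a ξ s t : ℝ} {X Y : ℝ → ℝ} (hs : 0 < s) (hst : s ≤ t)
    (hX : ∀ τ ∈ Icc s t, HasDerivAt X (ξ ^ 2 * Y τ) τ)
    (hY : ∀ τ ∈ Icc s t, HasDerivAt Y ((-ξ ^ 2 + a ^ 2 / τ) * X τ) τ) :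
    X t ^ 2 + Y t ^ 2 ≤ (t / s) ^ (a ^ 2) * (X s ^ 2 + Y s ^ 2) := by
  have := energy_bound (r := a ^ 2) (A := 1) (B := 0) (l := 1) (U := 1) hs hst hX hY
    one_pos le_rfl le_rfl (by simp) (by simp) ?_
  · simpa using this
  intro τ hτ x y
  simp only [zero_div, zero_mul, sub_zero, zero_add, sub_self, one_mul]
  nlinarith [mul_nonneg (sq_nonneg a) (sq_nonneg (x - y))]

/-- The bound on `X² + Y²` with an arbitrary rate `r > 0`, uniform in `ξ`. -/
lemma sq_bound (a r : ℝ) (hr : 0 < r) :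
    ∃ K : ℝ, 1 ≤ K ∧ ∀ (ξ t₀ t : ℝ), 0 < t₀ → t₀ ≤ t → ∀ X Y : ℝ → ℝ,
      (∀ τ ∈ Icc t₀ t, HasDerivAt X (ξ ^ 2 * Y τ) τ) →
      (∀ τ ∈ Icc t₀ t, HasDerivAt Y ((-ξ ^ 2 + a ^ 2 / τ) * X τ) τ) →
      X t ^ 2 + Y t ^ 2 ≤ K * (t / t₀) ^ r * (X t₀ ^ 2 + Y t₀ ^ 2) := by
  obtain ⟨κ, hκ, hrκ⟩ : ∃ κ : ℝ, 1 ≤ κ ∧ a ^ 2 + 1 ≤ r * κ := by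
    refine ⟨1 + (a ^ 2 + 1) / r, by simp; positivity, ?_⟩
    rw [mul_add, mul_div_cancel₀ _ hr.ne']
    linarith
  set η : ℝ := 1 / κ ^ 2 with hη
  have hη0 : 0 < η := by positivity
  -- The summand `η` guarantees `η ≤ M`.
  set M : ℝ := a ^ 2 * (1 + r) / r + η with hM
  have hMη : η ≤ M := by
    have : 0 ≤ a ^ 2 * (1 + r) / r := by positivity
    linarith
  have hκ2 : 1 ≤ κ ^ 2 := one_le_pow₀ hκ
  have hL : 1 ≤ (M / η) ^ (a ^ 2) :=
    Real.one_le_rpow ((one_le_div hη0).2 hMη) (sq_nonneg a)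
  have hLr : 1 ≤ (M / η) ^ (a ^ 2) * (1 + r) := one_le_mul_of_one_le_of_one_le hL (by linarith)
  refine ⟨κ ^ 2 * ((M / η) ^ (a ^ 2) * (1 + r)), one_le_mul_of_one_le_of_one_le hκ2 hLr, ?_⟩
  intro ξ t₀ t ht₀ htt X Y hX hY
  have hN : ∀ τ, 0 ≤ X τ ^ 2 + Y τ ^ 2 := fun τ => by positivity
  have hsub : ∀ s u, t₀ ≤ s → u ≤ t → Icc s u ⊆ Icc t₀ t := fun s u h h' => Icc_subset_Icc h h'
  rcases eq_or_ne ξ 0 with hξ | hξ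
  · have h := low_bound (r := r) (κ := κ) ht₀ htt hX hY hκ hrκ (by rw [hξ]; simp; positivity)
    have hD : 0 ≤ (t / t₀) ^ r * (X t₀ ^ 2 + Y t₀ ^ 2) := by
      have := ht₀.trans_le htt
      positivity
    nlinarith [mul_nonneg (mul_nonneg (sq_nonneg κ) (sub_nonneg.2 hLr)) hD]
  have hξ2 : 0 < ξ ^ 2 := by positivity
  refine glue (N := fun τ => X τ ^ 2 + Y τ ^ 2) (T := η / ξ ^ 2) hN ht₀ hκ2 hLr ?_ ?_
    t₀ t le_rfl htt le_rfl
  · intro s u hs hsu hu huT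
    refine low_bound (ht₀.trans_le hs) hsu (fun τ hτ => hX τ (hsub s u hs hu hτ))
      (fun τ hτ => hY τ (hsub s u hs hu hτ)) hκ hrκ ?_
    rw [le_div_iff₀ hξ2] at huT
    linarith
  intro s u hs hsu hu hTs
  refine glue (N := fun τ => X τ ^ 2 + Y τ ^ 2) (T := M / ξ ^ 2) (t₀ := s) (t := u) hN
    (ht₀.trans_le hs) hL (by linarith) ?_ ?_ s u le_rfl hsu le_rfl
  · intro s' u' hs' hsu' hu' huT
    have hs0 : 0 < s' := ht₀.trans_le (hs.trans hs')
    have hsb := hsub s' u' (hs.trans hs') (hu'.trans hu)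
    have h := naive_bound hs0 hsu' (fun τ hτ => hX τ (hsb hτ)) (fun τ hτ => hY τ (hsb hτ))
    have h1 : (u' / s') ≤ M / η := by
      have hTs' := hTs.trans hs'
      rw [div_le_iff₀ hξ2] at hTs'
      rw [le_div_iff₀ hξ2] at huT
      rw [div_le_div_iff₀ hs0 hη0]
      have hu0 : 0 < u' := hs0.trans_le hsu'
      have e1 := mul_le_mul_of_nonneg_left hTs' hu0.le
      have e2 := mul_le_mul_of_nonneg_right huT hs0.le
      linarith
    have h2 : 1 ≤ (u' / s') ^ r :=
      Real.one_le_rpow ((one_le_div hs0).2 hsu') hr.le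
    have h3 : (u' / s') ^ (a ^ 2) ≤ (M / η) ^ (a ^ 2) :=
      Real.rpow_le_rpow (div_nonneg (hs0.trans_le hsu').le hs0.le) h1 (sq_nonneg a)
    refine h.trans (mul_le_mul_of_nonneg_right (h3.trans ?_) (hN s'))
    exact le_mul_of_one_le_right (by linarith) h2
  · intro s' u' hs' hsu' hu' hTs'
    have hsb := hsub s' u' (hs.trans hs') (hu'.trans hu)
    refine high_bound (ht₀.trans_le (hs.trans hs')) hsu' (fun τ hτ => hX τ (hsb hτ))
      (fun τ hτ => hY τ (hsb hτ)) hξ hr ?_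
    rw [div_le_iff₀ hξ2] at hTs'
    linarith

end FourierMode

/-- For every `a` and every `δ > 0` there is `C = C(a,δ) > 0` such that
any solution `(X, Y)` on `[t₀, t]` (with `1 ≤ t₀ ≤ t`) of the Fourier-mode system
`X′ = ξ² Y`, `Y′ = (−ξ² + a²/τ) X` satisfies
`|X(t)| + |Y(t)| ≤ C (t/t₀)^δ (|X(t₀)| + |Y(t₀)|)`, uniformly in the frequency `ξ`. -/
theorem fourier_mode_growth_improved (a δ : ℝ) (hδ : 0 < δ) :
    ∃ C : ℝ, 0 < C ∧
      ∀ (ξ t₀ t : ℝ), 1 ≤ t₀ → t₀ ≤ t →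
        ∀ X Y : ℝ → ℝ,
          (∀ τ ∈ Icc t₀ t, HasDerivAt X (ξ ^ 2 * Y τ) τ) →
          (∀ τ ∈ Icc t₀ t, HasDerivAt Y ((-ξ ^ 2 + a ^ 2 / τ) * X τ) τ) →
          |X t| + |Y t| ≤ C * (t / t₀) ^ δ * (|X t₀| + |Y t₀|) := by
  obtain ⟨K, hK, h⟩ := FourierMode.sq_bound a (2 * δ) (by positivity)
  refine ⟨2 * K, by linarith, ?_⟩
  intro ξ t₀ t ht₀ htt X Y hX hY
  have ht₀' : 0 < t₀ := by linarith
  have hq : 0 ≤ t / t₀ := div_nonneg (by linarith) ht₀'.le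
  have hb := h ξ t₀ t ht₀' htt X Y hX hY
  rw [mul_comm 2 δ, Real.rpow_mul hq, Real.rpow_two] at hb
  set p := (t / t₀) ^ δ with hp
  have hp0 : 0 ≤ p := by positivity
  refine (pow_le_pow_iff_left₀ (by positivity) (by positivity) two_ne_zero).1 ?_
  have h1 : (|X t| + |Y t|) ^ 2 ≤ 2 * (X t ^ 2 + Y t ^ 2) := by
    nlinarith [sq_nonneg (|X t| - |Y t|), sq_abs (X t), sq_abs (Y t)]
  have h2 : X t₀ ^ 2 + Y t₀ ^ 2 ≤ (|X t₀| + |Y t₀|) ^ 2 := by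
    nlinarith [mul_nonneg (abs_nonneg (X t₀)) (abs_nonneg (Y t₀)), sq_abs (X t₀), sq_abs (Y t₀)]
  calc (|X t| + |Y t|) ^ 2 ≤ 2 * (K * p ^ 2 * (X t₀ ^ 2 + Y t₀ ^ 2)) := by linarith
    _ ≤ 2 * (K * p ^ 2 * (|X t₀| + |Y t₀|) ^ 2) := by gcongr
    _ = (2 * K) * (p ^ 2 * (|X t₀| + |Y t₀|) ^ 2) := by ring
    _ ≤ (2 * K) ^ 2 * (p ^ 2 * (|X t₀| + |Y t₀|) ^ 2) := by
        gcongr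
        nlinarith
    _ = (2 * K * p * (|X t₀| + |Y t₀|)) ^ 2 := by ring
end

section
/- Let X, Y : [t₁, t] → ℝ (with 0 < t₁ ≤ t) be differentiable functions satisfying X′(τ) = ξ² Y(τ) and Y′(τ) = (−ξ² + a²/τ) X(τ) for some ξ, a ∈ ℝ and all τ ∈ [t₁, t]. Then X(t)² + Y(t)² ≤ (t/t₁)^{2a²} · (X(t₁)² + Y(t₁)²). -/
/-!
The energy `E(τ) = X(τ)² + Y(τ)²` satisfies `E′ = (2a²/τ) X Y`: the `ξ²` terms cancel. Since
`X Y ≤ E`, the integrating factor `τ ^ (-2a²)` gives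
`(τ ^ (-2a²) E)′ = τ ^ (-2a²) (2a²/τ) (X Y - E) ≤ 0`, so `τ ^ (-2a²) E(τ)` is nonincreasing on
`[t₁, t]`. Comparing its values at the two endpoints is the claimed bound.
-/

open Set

/-- The derivative of the energy weighted by the integrating factor. -/
theorem hasDerivAt_weighted_energy {a ξ τ : ℝ} (hτ : 0 < τ) {X Y : ℝ → ℝ}
    (hX : HasDerivAt X (ξ ^ 2 * Y τ) τ)
    (hY : HasDerivAt Y ((-ξ ^ 2 + a ^ 2 / τ) * X τ) τ) :
    HasDerivAt (fun s => s ^ (-(2 * a ^ 2)) * (X s ^ 2 + Y s ^ 2))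
      (τ ^ (-(2 * a ^ 2)) * (2 * a ^ 2 / τ) * (X τ * Y τ - (X τ ^ 2 + Y τ ^ 2))) τ := by
  have h := (Real.hasDerivAt_rpow_const (p := -(2 * a ^ 2)) (Or.inl hτ.ne')).mul
    ((hX.pow 2).add (hY.pow 2))
  refine h.congr_deriv ?_
  rw [Real.rpow_sub_one hτ.ne']
  simp only [Pi.add_apply, Pi.pow_apply]
  field_simp
  push_cast
  ring

/-- Energy estimate for the Fourier-mode system: if
`X′ = ξ² Y` and `Y′ = (−ξ² + a²/τ) X` on `[t₁, t]` with `0 < t₁ ≤ t`, then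
`X(t)² + Y(t)² ≤ (t/t₁)^{2a²} (X(t₁)² + Y(t₁)²)`. -/
theorem fourier_mode_energy_estimate (a ξ t₁ t : ℝ) (ht₁ : 0 < t₁) (ht : t₁ ≤ t)
    (X Y : ℝ → ℝ)
    (hX : ∀ τ ∈ Icc t₁ t, HasDerivAt X (ξ ^ 2 * Y τ) τ)
    (hY : ∀ τ ∈ Icc t₁ t, HasDerivAt Y ((-ξ ^ 2 + a ^ 2 / τ) * X τ) τ) :
    X t ^ 2 + Y t ^ 2 ≤ (t / t₁) ^ (2 * a ^ 2) * (X t₁ ^ 2 + Y t₁ ^ 2) := by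
  have hpos : ∀ τ ∈ Icc t₁ t, 0 < τ := fun τ hτ => ht₁.trans_le hτ.1
  have hderiv := fun τ (hτ : τ ∈ Icc t₁ t) =>
    hasDerivAt_weighted_energy (hpos τ hτ) (hX τ hτ) (hY τ hτ)
  have hanti : AntitoneOn (fun s => s ^ (-(2 * a ^ 2)) * (X s ^ 2 + Y s ^ 2)) (Icc t₁ t) := by
    refine antitoneOn_of_hasDerivWithinAt_nonpos (convex_Icc t₁ t)
      (fun τ hτ => (hderiv τ hτ).continuousAt.continuousWithinAt)
      (fun τ hτ => (hderiv τ (interior_subset hτ)).hasDerivWithinAt) fun τ hτ => ?_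
    have hτ₀ := hpos τ (interior_subset hτ)
    refine mul_nonpos_of_nonneg_of_nonpos (by positivity) ?_
    nlinarith [sq_nonneg (X τ - Y τ), sq_nonneg (X τ), sq_nonneg (Y τ)]
  have hle := hanti (left_mem_Icc.2 ht) (right_mem_Icc.2 ht) ht
  have ht₀ : 0 < t := ht₁.trans_le ht
  simp only [Real.rpow_neg ht₀.le, Real.rpow_neg ht₁.le] at hle
  rw [Real.div_rpow ht₀.le ht₁.le]
  have hpow : 0 < t ^ (2 * a ^ 2) := Real.rpow_pos_of_pos ht₀ _
  calc X t ^ 2 + Y t ^ 2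
      = t ^ (2 * a ^ 2) * ((t ^ (2 * a ^ 2))⁻¹ * (X t ^ 2 + Y t ^ 2)) := by field_simp
    _ ≤ t ^ (2 * a ^ 2) * ((t₁ ^ (2 * a ^ 2))⁻¹ * (X t₁ ^ 2 + Y t₁ ^ 2)) := by gcongr
    _ = t ^ (2 * a ^ 2) / t₁ ^ (2 * a ^ 2) * (X t₁ ^ 2 + Y t₁ ^ 2) := by ring
end

section
/- Let a > 0 and let T : ℝ → ℝ³ and N : ℝ → ℂ³ be differentiable maps satisfying T′(s) = Re( a e^{−i s²/4} N(s) ) and N′(s) = −a e^{i s²/4} T(s) for all s ∈ ℝ. Define n(s) = Re( e^{−i s²/4} N(s) ) and b(s) = Im( e^{−i s²/4} N(s) ). Then the triple (T, n, b) satisfies the Frenet system of a curve with curvature a and torsion s/2: T′(s) = a·n(s), n′(s) = −a·T(s) + (s/2)·b(s), and b′(s) = −(s/2)·n(s) for all s ∈ ℝ. -/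
open Complex

/-!
The complex vector `u = e^{-is²/4} N` has real part `n` and imaginary part `b`. The product rule
and the equation for `N'` give `u' = -(i s / 2) u - a T`, because the two phases `e^{∓is²/4}`
cancel. Since `T` is real, taking real and imaginary parts yields the equations for `n'` and `b'`;
the equation for `T'` is the given one with the real factor `a` pulled out of the real part.
-/

/-- If `T : ℝ → ℝ³` and `N : ℝ → ℂ³` satisfy
`T′(s) = Re(a e^{−is²/4} N(s))` and `N′(s) = −a e^{is²/4} T(s)`, then, with
`n = Re(e^{−is²/4} N)` and `b = Im(e^{−is²/4} N)`, the triple `(T, n, b)` satisfies the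
Frenet system with curvature `a` and torsion `s/2`:
`T′ = a n`, `n′ = −a T + (s/2) b`, `b′ = −(s/2) n`. -/
theorem selfsimilar_limit_frenet_system (a : ℝ) (ha : 0 < a)
    (T : ℝ → (Fin 3 → ℝ)) (N : ℝ → (Fin 3 → ℂ))
    (hT : ∀ i, Differentiable ℝ (fun s => T s i))
    (hN : ∀ i, Differentiable ℝ (fun s => N s i))
    (hT' : ∀ s : ℝ, ∀ i, deriv (fun r => T r i) s =
      ((a : ℂ) * Complex.exp (-I * s ^ 2 / 4) * N s i).re)
    (hN' : ∀ s : ℝ, ∀ i, deriv (fun r => N r i) s =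
      -(a : ℂ) * Complex.exp (I * s ^ 2 / 4) * (T s i : ℂ))
    (n b : ℝ → (Fin 3 → ℝ))
    (hn : ∀ s i, n s i = (Complex.exp (-I * s ^ 2 / 4) * N s i).re)
    (hb : ∀ s i, b s i = (Complex.exp (-I * s ^ 2 / 4) * N s i).im) :
    ∀ s : ℝ, ∀ i,
      deriv (fun r => T r i) s = a * n s i ∧
      deriv (fun r => n r i) s = -a * T s i + (s / 2) * b s i ∧
      deriv (fun r => b r i) s = -(s / 2) * n s i := by
  intro s i
  have hinner : HasDerivAt (fun r : ℝ => -I * (r : ℂ) ^ 2 / 4) (-I * (s : ℂ) / 2) s := by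
    have h := (((hasDerivAt_id s).ofReal_comp.pow 2).const_mul (-I)).div_const 4
    refine h.congr_deriv ?_
    simp
    ring
  have hNs := (hN i s).hasDerivAt
  rw [hN' s i] at hNs
  have hcancel : Complex.exp (-I * s ^ 2 / 4) * Complex.exp (I * s ^ 2 / 4) = 1 := by
    rw [← Complex.exp_add, ← Complex.exp_zero]
    congr 1
    ring
  -- The profile `u = e^{-is²/4} N = n + i b` satisfies `u' = -(i s / 2) u - a T`;
  -- its real and imaginary parts are the last two Frenet equations.
  have hu : HasDerivAt (fun r : ℝ => Complex.exp (-I * r ^ 2 / 4) * N r i)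
      (-I * ((s / 2 : ℝ) : ℂ) * (Complex.exp (-I * s ^ 2 / 4) * N s i)
        - ((a * T s i : ℝ) : ℂ)) s := by
    refine (hinner.cexp.mul hNs).congr_deriv ?_
    push_cast
    linear_combination (-(a : ℂ) * T s i) * hcancel
  refine ⟨?_, ?_, ?_⟩
  · rw [hT', hn, mul_assoc, Complex.re_ofReal_mul]
  · have h := (Complex.reCLM.hasFDerivAt.comp_hasDerivAt s hu).deriv
    simp only [hn, hb]
    refine h.trans ?_
    rw [mul_assoc, Complex.reCLM_apply, Complex.sub_re, Complex.ofReal_re, neg_mul,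
      Complex.neg_re, Complex.I_mul_re, Complex.im_ofReal_mul]
    ring
  · have h := (Complex.imCLM.hasFDerivAt.comp_hasDerivAt s hu).deriv
    simp only [hn, hb]
    refine h.trans ?_
    rw [mul_assoc, Complex.imCLM_apply, Complex.sub_im, Complex.ofReal_im, neg_mul,
      Complex.neg_im, Complex.I_mul_im, Complex.re_ofReal_mul]
    ring
end
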